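/- Generating function for all Schur polynomials: ∑_λ s_λ(x_1, ..., x_n) = ∏_{i=1}^n 1/(1 − x_i) · ∏_{1 ≤ i < j ≤ n} 1/(1 − x_i x_j), where the sum is over all partitions λ with at most n parts, as an identity of formal power series in x_1, ..., x_n. -/

import Mathlib

open MvPolynomial

/-- The complete homogeneous symmetric polynomial with integer index: `0` for negative
index, `h_k` for `k ≥ 0`. -/
noncomputable def hInt (nv : ℕ) (k : ℤ) : MvPolynomial (Fin nv) ℚ :=
  if 0 ≤ k then hsymm (Fin nv) ℚ k.toNat else 0

/-- The Schur polynomial in `nv` variables of a partition given by its first `N` parts,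
defined by the Jacobi–Trudi determinant `s_λ = det(h_{λ_i + j - i})_{i,j < N}`. -/
noncomputable def schur (nv N : ℕ) (lam : Fin N → ℕ) : MvPolynomial (Fin nv) ℚ :=
  Matrix.det (Matrix.of fun i j : Fin N => hInt nv ((lam i : ℤ) + (j : ℤ) - (i : ℤ)))

/-!
By the bialternant formula `s_λ = a_{λ+δ} / a_δ`, the claim is that the sum of the alternants
`a_{λ+δ}` is `a_δ` times the product. Splitting off the last part `m` of `λ` takes the factor
`(x_1 ⋯ x_n) ^ m` out of the alternant, and expanding what is left along its last row gives
alternants in `n - 1` variables. So, by induction on `n`, the claim becomes a rational identity: the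
Lagrange interpolation formula for `∏ (1 - x_k T)` at the nodes `0`, `-1`, `x_1`, …, `x_n`. This
argument needs distinct nonzero `x_i`; such points are dense in the open polydisc, where both sides
are continuous.
-/

section Lagrange

variable {F : Type*} [Field F]

lemma sum_eval_div_prod_succAbove_sub_eq_zero {m : ℕ} {v : Fin (m + 1) → F}
    (hv : Function.Injective v) {P : Polynomial F} (hP : P.natDegree < m) :
    ∑ i, P.eval (v i) / ∏ l, (v (i.succAbove l) - v i) = 0 := by
  have hcoeff := Lagrange.coeff_eq_sum (s := Finset.univ) hv.injOn (P := P)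
    (Polynomial.degree_le_natDegree.trans_lt (by simpa using mod_cast hP.trans m.lt_succ_self))
  rw [Finset.card_univ, Fintype.card_fin, Nat.add_sub_cancel,
    Polynomial.coeff_eq_zero_of_natDegree_lt hP] at hcoeff
  have hsign (i : Fin (m + 1)) : P.eval (v i) / ∏ l, (v (i.succAbove l) - v i) =
      (-1) ^ m * (P.eval (v i) / ∏ j ∈ Finset.univ.erase i, (v i - v j)) := by
    have herase : Finset.univ.erase i = Finset.univ.map i.succAboveEmb := by
      rw [Fin.univ_succAbove _ i, Finset.erase_cons]
    have hneg : ∏ l, (v i - v (i.succAbove l)) = (-1) ^ m * ∏ l, (v (i.succAbove l) - v i) := by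
      simp_rw [← neg_sub (v (i.succAbove _)), Finset.prod_neg, Finset.card_univ, Fintype.card_fin]
    simp only [herase, Finset.prod_map, Fin.coe_succAboveEmb, hneg]
    field_simp
  simp_rw [hsign, ← Finset.mul_sum, ← hcoeff, mul_zero]

lemma sum_eval_div_mul_one_add_mul_prod_succAbove_sub {n : ℕ} {x : Fin (n + 1) → F}
    (hinj : Function.Injective x) (h0 : ∀ i, x i ≠ 0) (h1 : ∀ i, x i ≠ -1) {P : Polynomial F}
    (hP : P.natDegree ≤ n + 1) :
    ∑ k, P.eval (x k) / (x k * (1 + x k) * ∏ l, (x (k.succAbove l) - x k)) =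
      P.eval 0 / ∏ k, x k - P.eval (-1) / ∏ k, (1 + x k) := by
  let v : Fin (n + 1 + 1 + 1) → F := Fin.cons 0 (Fin.cons (-1) x)
  have hv : Function.Injective v := by
    simp only [v, Fin.cons_injective_iff, Set.mem_range, not_exists]
    exact ⟨Fin.cases (by simp) h0, h1, hinj⟩
  have hnode (k : Fin (n + 1)) :
      (0 - x k) * ∏ l, ((Fin.cons (-1) x : Fin (n + 1 + 1) → F) (k.succ.succAbove l) - x k) =
        x k * (1 + x k) * ∏ l, (x (k.succAbove l) - x k) := by
    simp only [Fin.prod_univ_succ, Fin.succ_succAbove_zero, Fin.succ_succAbove_succ, Fin.cons_zero,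
      Fin.cons_succ]
    ring
  have hsum := sum_eval_div_prod_succAbove_sub_eq_zero hv (P := P) (by lia)
  simp only [Fin.sum_univ_succ (n := n + 2), Fin.sum_univ_succ (n := n + 1),
    Fin.prod_univ_succ (n := n + 1), Fin.succAbove_zero, Fin.succ_succAbove_zero,
    Fin.succ_succAbove_succ, v, Fin.cons_zero, Fin.cons_succ, hnode, sub_zero, sub_neg_eq_add,
    neg_one_mul, add_comm _ (1 : F), div_neg] at hsum
  linear_combination hsum

/- Interpolating at `-1` as well is what turns the factor `1 - x k ^ 2` of `∏ j, (1 - x j * x k)`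
into `1 - x k`. -/
lemma sum_one_sub_mul_prod_succAbove_div_sub {n : ℕ} {x : Fin (n + 1) → F}
    (hinj : Function.Injective x) (h0 : ∀ i, x i ≠ 0) (h1 : ∀ i, x i ≠ -1) :
    ∑ k, (1 - x k) * ∏ l, x (k.succAbove l) * (1 - x k * x (k.succAbove l)) /
      (x (k.succAbove l) - x k) = 1 - ∏ k, x k := by
  let P : Polynomial F := ∏ k, (1 - Polynomial.C (x k) * Polynomial.X)
  have hPeval (t : F) : P.eval t = ∏ k, (1 - x k * t) := by simp [P, Polynomial.eval_prod]
  have hPdeg : P.natDegree ≤ n + 1 := by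
    refine (Polynomial.natDegree_prod_le _ _).trans
      ((Finset.sum_le_card_nsmul _ _ 1 fun k _ => ?_).trans (by simp))
    compute_degree
  have hne (k : Fin (n + 1)) : 1 + x k ≠ 0 := fun h => h1 k (eq_neg_of_add_eq_zero_right h)
  have hterm (k : Fin (n + 1)) :
      (1 - x k) * ∏ l, x (k.succAbove l) * (1 - x k * x (k.succAbove l)) /
          (x (k.succAbove l) - x k) =
        (∏ j, x j) * (P.eval (x k) / (x k * (1 + x k) * ∏ l, (x (k.succAbove l) - x k))) := by
    have hdiff : ∏ l, (x (k.succAbove l) - x k) ≠ 0 := Finset.prod_ne_zero_iff.2 fun l _ =>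
      sub_ne_zero.2 (hinj.ne (k.succAbove_ne l))
    rw [hPeval, Fin.prod_univ_succAbove x k, Fin.prod_univ_succAbove _ k, Finset.prod_div_distrib,
      Finset.prod_mul_distrib]
    simp_rw [mul_comm _ (x k)]
    field_simp [h0 k, hne k]
    ring
  have hX : ∏ k, x k ≠ 0 := Finset.prod_ne_zero_iff.2 fun k _ => h0 k
  have hY : ∏ k, (1 + x k) ≠ 0 := Finset.prod_ne_zero_iff.2 fun k _ => hne k
  have hzero : P.eval 0 = 1 := by simp [hPeval]
  have hnegOne : P.eval (-1) = ∏ k, (1 + x k) := by simp [hPeval]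
  simp_rw [hterm, ← Finset.mul_sum]
  rw [sum_eval_div_mul_one_add_mul_prod_succAbove_sub hinj h0 h1 hPdeg, hzero, hnegOne,
    div_self hY, mul_sub, mul_one_div_cancel hX, mul_one]

end Lagrange

lemma prod_Ioi_succAbove_of_symm {M : Type*} [CommMonoid M] {n : ℕ}
    {f : Fin (n + 1) → Fin (n + 1) → M} (hf : ∀ i j, f i j = f j i) (k : Fin (n + 1)) :
    ∏ i, ∏ j ∈ Finset.Ioi i, f i j =
      (∏ l, f k (k.succAbove l)) *
        ∏ i, ∏ j ∈ Finset.Ioi i, f (k.succAbove i) (k.succAbove j) := by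
  simp_rw [← Finset.filter_lt_eq_Ioi, Finset.prod_filter, Fin.prod_univ_succAbove _ k,
    lt_irrefl, if_false, one_mul, Finset.prod_mul_distrib, Fin.succAbove_lt_succAbove_iff,
    ← mul_assoc, ← Finset.prod_mul_distrib]
  congr! 2 with l
  rcases (Fin.succAbove_ne k l).lt_or_gt with h | h <;> simp [h, h.not_gt, hf k]

lemma prod_Ioi_sub_succAbove {R : Type*} [CommRing R] {n : ℕ} (x : Fin (n + 1) → R)
    (k : Fin (n + 1)) :
    (-1) ^ (k : ℕ) * ∏ i, ∏ j ∈ Finset.Ioi i, (x i - x j) =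
      (∏ l, (x k - x (k.succAbove l))) *
        ∏ i, ∏ j ∈ Finset.Ioi i, (x (k.succAbove i) - x (k.succAbove j)) := by
  have hperm := Equiv.Perm.prod_Ioi_comp_eq_sign_mul_prod k.cycleRange.symm
    (f := fun i j => x i - x j) fun i j => (neg_sub _ _).symm
  rw [Equiv.Perm.sign_symm, Fin.sign_cycleRange] at hperm
  simpa [Fin.prod_univ_succ] using hperm.symm

section Alternant

variable {R : Type*} [CommRing R] {n : ℕ}

/-- The alternant `a_{λ+δ}(x)`, the determinant with entries `x_k ^ (λ_i + n - 1 - i)`. -/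
def alternant (x : Fin n → R) (lam : Fin n → ℕ) : R :=
  Matrix.det (Matrix.of fun i k : Fin n => x k ^ (lam i + i.rev))

lemma alternant_zero (x : Fin n → R) :
    alternant x 0 = ∏ i, ∏ j ∈ Finset.Ioi i, (x i - x j) := by
  have hvand : (Matrix.of fun i k : Fin n => x k ^ ((0 : Fin n → ℕ) i + i.rev)).transpose =
      Matrix.projVandermonde 1 x := by
    ext; simp [Matrix.projVandermonde_apply]
  rw [alternant, ← Matrix.det_transpose, hvand, Matrix.det_projVandermonde]
  simp

lemma alternant_zero_succAbove (x : Fin (n + 1) → R) (k : Fin (n + 1)) :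
    (-1) ^ (k : ℕ) * alternant x 0 =
      (∏ l, (x k - x (k.succAbove l))) * alternant (x ∘ k.succAbove) 0 := by
  simp only [alternant_zero, prod_Ioi_sub_succAbove, Function.comp_apply]

lemma alternant_zero_ne_zero [IsDomain R] {x : Fin n → R} (hx : Function.Injective x) :
    alternant x 0 ≠ 0 := by
  rw [alternant_zero]
  exact Finset.prod_ne_zero_iff.2 fun i _ => Finset.prod_ne_zero_iff.2 fun j hj =>
    sub_ne_zero.2 (hx.ne (Finset.mem_Ioi.1 hj).ne)

lemma alternant_add_const (x : Fin n → R) (lam : Fin n → ℕ) (m : ℕ) :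
    alternant x (fun i => lam i + m) = (∏ k, x k) ^ m * alternant x lam := by
  rw [alternant, alternant, ← Finset.prod_pow, ← Matrix.det_mul_row]
  congr 1
  ext i k
  simp only [Matrix.of_apply]
  ring

lemma alternant_snoc_zero (x : Fin (n + 1) → R) (lam : Fin n → ℕ) :
    alternant x (Fin.snoc (α := fun _ => ℕ) lam 0) =
      ∑ k : Fin (n + 1), (-1) ^ (n + (k : ℕ)) * (∏ l, x (k.succAbove l)) *
        alternant (x ∘ k.succAbove) lam := by
  rw [alternant, Matrix.det_succ_row _ (Fin.last n)]
  refine Finset.sum_congr rfl fun k _ => ?_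
  have hminor : (Matrix.of fun i k => x k ^ (Fin.snoc (α := fun _ => ℕ) lam 0 i +
        (i.rev : ℕ))).submatrix (Fin.last n).succAbove k.succAbove =
      Matrix.of fun i l => x (k.succAbove l) *
        Matrix.of (fun i l => (x ∘ k.succAbove) l ^ (lam i + (i.rev : ℕ))) i l := by
    ext i l
    simp only [Matrix.submatrix_apply, Matrix.of_apply, Fin.succAbove_last, Fin.snoc_castSucc,
      Fin.rev_castSucc, Fin.val_succ, Function.comp_apply]
    ring
  rw [hminor, Matrix.det_mul_row, alternant]
  simp [mul_assoc]

end Alternant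

section Bialternant

lemma aeval_hsymm_eq_sum {σ S R : Type*} [Fintype σ] [DecidableEq σ] [CommSemiring S]
    [CommSemiring R] [Algebra S R] (x : σ → R) (k : ℕ) :
    aeval x (hsymm σ S k) = ∑ d ∈ Finset.univ.finsuppAntidiag k, ∏ i, x i ^ d i := by
  rw [← Finset.sum_coe_sort, hsymm, map_sum]
  refine Fintype.sum_equiv ((Sym.equivNatSum σ k).trans
    (Equiv.subtypeEquivRight fun d => by
      simp [Finset.mem_finsuppAntidiag, Finsupp.sum_fintype])) _ _ fun s => ?_
  rw [map_multiset_prod, Multiset.map_map]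
  simp only [Function.comp_def, aeval_X]
  rw [Finset.prod_multiset_map_count]
  refine Finset.prod_subset (Finset.subset_univ _) fun i _ hi => ?_
  rw [Multiset.count_eq_zero_of_notMem (by simpa using hi), pow_zero]

variable {R : Type*} [CommRing R]

lemma mk_pow_mul_one_sub (a : R) :
    PowerSeries.mk (a ^ ·) * (1 - PowerSeries.C a * PowerSeries.X) = 1 := by
  simpa [PowerSeries.rescale_mk, PowerSeries.rescale_X] using
    congrArg (PowerSeries.rescale a) (PowerSeries.mk_one_mul_one_sub_eq_one R)

variable {n : ℕ}

/-- The polynomial `∏_{l ≠ k} (1 - x_l T)`, which generates the elementary symmetric functions, up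
to sign, of the variables other than `x_k`. -/
noncomputable def elemGenErase (x : Fin n → R) (k : Fin n) : Polynomial R :=
  ∏ l ∈ Finset.univ.erase k, (1 - Polynomial.C (x l) * Polynomial.X)

lemma natDegree_elemGenErase_lt (x : Fin n → R) (k : Fin n) : (elemGenErase x k).natDegree < n := by
  refine ((Polynomial.natDegree_prod_le _ _).trans (Finset.sum_le_card_nsmul _ _ 1 fun l _ => ?_)
    ).trans_lt ?_
  · compute_degree
  · simpa using k.pos

lemma prod_mk_pow_mul_elemGenErase (x : Fin n → R) (k : Fin n) :
    (∏ l, PowerSeries.mk (x l ^ ·)) * (elemGenErase x k : PowerSeries R) =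
      PowerSeries.mk (x k ^ ·) := by
  have hcoe : (elemGenErase x k : PowerSeries R) =
      ∏ l ∈ Finset.univ.erase k, (1 - PowerSeries.C (x l) * PowerSeries.X) := by
    rw [elemGenErase, ← Polynomial.coeToPowerSeries.ringHom_apply, map_prod]
    simp
  rw [hcoe, ← Finset.mul_prod_erase _ _ (Finset.mem_univ k), mul_assoc, ← Finset.prod_mul_distrib]
  simp [mk_pow_mul_one_sub]

variable [Algebra ℚ R]

lemma aeval_hInt_sub (x : Fin n → R) (m b : ℕ) :
    aeval x (hInt n (m - b)) =
      if b ≤ m then PowerSeries.coeff (m - b) (∏ l, PowerSeries.mk (x l ^ ·)) else 0 := by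
  by_cases h : b ≤ m
  · rw [hInt, if_pos (by simpa using h), if_pos h, aeval_hsymm_eq_sum, PowerSeries.coeff_prod,
      show ((m : ℤ) - b).toNat = m - b by omega]
    simp only [PowerSeries.coeff_mk]
  · rw [hInt, if_neg (by simpa using h), if_neg h, map_zero]

lemma pow_eq_sum_aeval_hInt_mul_coeff (x : Fin n → R) (k : Fin n) (m : ℕ) :
    x k ^ m = ∑ b : Fin n, aeval x (hInt n (m - (b : ℕ))) * (elemGenErase x k).coeff b := by
  have hexpand : (elemGenErase x k : PowerSeries R) = ∑ b : Fin n,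
      PowerSeries.C ((elemGenErase x k).coeff b) * PowerSeries.X ^ (b : ℕ) := by
    rw [Fin.sum_univ_eq_sum_range (fun b => PowerSeries.C ((elemGenErase x k).coeff b) *
      PowerSeries.X ^ b)]
    conv_lhs => rw [Polynomial.as_sum_range' _ _ (natDegree_elemGenErase_lt x k),
      ← Polynomial.coeToPowerSeries.ringHom_apply, map_sum]
    simp [← Polynomial.C_mul_X_pow_eq_monomial]
  have hcoeff := congrArg (PowerSeries.coeff m) (prod_mk_pow_mul_elemGenErase x k)
  rw [PowerSeries.coeff_mk, hexpand, Finset.mul_sum, map_sum] at hcoeff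
  rw [← hcoeff]
  refine Finset.sum_congr rfl fun b _ => ?_
  rw [mul_left_comm, PowerSeries.coeff_C_mul, PowerSeries.coeff_mul_X_pow', aeval_hInt_sub,
    mul_comm]

lemma alternant_eq_schur_mul_det (x : Fin n → R) (lam : Fin n → ℕ) :
    alternant x lam = aeval x (schur n n lam) *
      Matrix.det (Matrix.of fun j k : Fin n => (elemGenErase x k).coeff j.rev) := by
  rw [schur, AlgHom.map_det, ← Matrix.det_mul, alternant]
  congr 1
  ext i k
  simp only [Matrix.mul_apply, Matrix.of_apply, AlgHom.mapMatrix_apply, Matrix.map_apply]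
  rw [pow_eq_sum_aeval_hInt_mul_coeff, ← Equiv.sum_comp Fin.revPerm]
  refine Finset.sum_congr rfl fun j _ => ?_
  congr 3
  simp only [Fin.revPerm_apply, Fin.val_rev]
  omega

lemma schur_zero (nv N : ℕ) : schur nv N 0 = 1 := by
  rw [schur, Matrix.det_of_isUpperTriangular]
  · simp [hInt]
  · intro i j hij
    have : (j : ℕ) < i := hij
    simp only [Matrix.of_apply, hInt]
    rw [if_neg (by simp; omega)]

theorem schur_mul_alternant_zero (x : Fin n → R) (lam : Fin n → ℕ) :
    aeval x (schur n n lam) * alternant x 0 = alternant x lam := by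
  rw [alternant_eq_schur_mul_det x lam, alternant_eq_schur_mul_det x 0, schur_zero, map_one,
    one_mul]

end Bialternant

section Bounds

lemma summable_prod_apply {ι κ : Type*} [Fintype ι] {f : ι → κ → ℝ} (hf0 : ∀ i k, 0 ≤ f i k)
    (hf : ∀ i, Summable (f i)) : Summable fun v : ι → κ => ∏ i, f i (v i) := by
  classical
  refine summable_of_sum_le (c := ∏ i, ∑' k, f i k)
    (fun v => Finset.prod_nonneg fun i _ => hf0 i _) fun u => ?_
  calc ∑ v ∈ u, ∏ i, f i (v i)
      ≤ ∑ v ∈ Fintype.piFinset fun i => u.image (· i), ∏ i, f i (v i) :=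
        Finset.sum_le_sum_of_subset_of_nonneg
          (fun v hv => Fintype.mem_piFinset.2 fun i => Finset.mem_image_of_mem _ hv)
          fun v _ _ => Finset.prod_nonneg fun i _ => hf0 i _
    _ = ∏ i, ∑ k ∈ u.image (· i), f i k := (Finset.prod_univ_sum _ _).symm
    _ ≤ ∏ i, ∑' k, f i k := Finset.prod_le_prod (fun i _ => Finset.sum_nonneg fun k _ => hf0 i k)
        fun i _ => (hf i).sum_le_tsum _ fun k _ => hf0 i k

lemma exists_lt_one_forall_norm_lt {ι E : Type*} [Finite ι] [SeminormedAddCommGroup E] {x : ι → E}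
    (hx : ∀ i, ‖x i‖ < 1) : ∃ r : ℝ, 0 < r ∧ r < 1 ∧ ∀ i, ‖x i‖ < r := by
  cases nonempty_fintype ι
  obtain ⟨r, hxr, hr1⟩ := exists_between ((pi_norm_lt_iff one_pos).2 hx)
  have hr0 := (norm_nonneg x).trans_lt hxr
  exact ⟨r, hr0, hr1, (pi_norm_lt_iff hr0).1 hxr⟩

variable {𝕜 : Type*} [NormedField 𝕜]

lemma norm_det_le_permanent {m : Type*} [Fintype m] [DecidableEq m] {A : Matrix m m 𝕜}
    {B : Matrix m m ℝ} (h : ∀ i j, ‖A i j‖ ≤ B i j) : ‖A.det‖ ≤ B.permanent := by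
  rw [Matrix.det_apply]
  refine (norm_sum_le _ _).trans (Finset.sum_le_sum fun σ _ => ?_)
  have hsign : ‖Equiv.Perm.sign σ • ∏ i, A (σ i) i‖ = ‖∏ i, A (σ i) i‖ := by
    rcases Int.units_eq_one_or (Equiv.Perm.sign σ) with hσ | hσ <;> simp [hσ]
  rw [hsign, norm_prod]
  exact Finset.prod_le_prod (fun i _ => norm_nonneg _) fun i _ => h _ _

lemma aeval_hInt_const_le (n : ℕ) {r : ℝ} (hr : 0 ≤ r) (k : ℕ) :
    aeval (fun _ => r) (hInt n k) ≤ (k + n).choose n * r ^ k := by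
  have hterm (d) (hd : d ∈ (Finset.univ : Finset (Fin n)).finsuppAntidiag k) :
      ∏ i, r ^ d i = r ^ k := by
    rw [Finset.prod_pow_eq_pow_sum, (Finset.mem_finsuppAntidiag.1 hd).1]
  rw [hInt, if_pos k.cast_nonneg, Int.toNat_natCast, aeval_hsymm_eq_sum, Finset.sum_congr rfl hterm,
    Finset.sum_const, nsmul_eq_mul, Finset.card_finsuppAntidiag_nat_eq_multichoose,
    Finset.card_univ, Fintype.card_fin, Nat.multichoose_eq]
  gcongr
  rw [add_comm k, Nat.choose_symm_add]
  exact Nat.choose_le_choose k (Nat.sub_le _ 1)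

variable [Algebra ℚ 𝕜] {n : ℕ} {x : Fin n → 𝕜} {r : ℝ}

lemma norm_aeval_hInt_le {y : Fin n → ℝ} (hx : ∀ i, ‖x i‖ ≤ y i) (k : ℤ) :
    ‖aeval x (hInt n k)‖ ≤ aeval y (hInt n k) := by
  rw [hInt]
  split_ifs
  · simp_rw [aeval_hsymm_eq_sum]
    refine (norm_sum_le _ _).trans (Finset.sum_le_sum fun d _ => ?_)
    rw [norm_prod]
    refine Finset.prod_le_prod (fun i _ => norm_nonneg _) fun i _ => ?_
    rw [norm_pow]
    exact pow_le_pow_left₀ (norm_nonneg _) (hx i) _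
  · simp

lemma norm_aeval_schur_le {y : Fin n → ℝ} (hx : ∀ i, ‖x i‖ ≤ y i) {N : ℕ} (lam : Fin N → ℕ) :
    ‖aeval x (schur n N lam)‖ ≤ (Matrix.of fun i j : Fin N =>
      aeval y (hInt n ((lam i : ℤ) + (j : ℤ) - (i : ℤ)))).permanent := by
  rw [schur, AlgHom.map_det]
  exact norm_det_le_permanent fun i j => norm_aeval_hInt_le hx _

lemma aeval_hInt_nonneg {y : Fin n → ℝ} (hy : ∀ i, 0 ≤ y i) (k : ℤ) : 0 ≤ aeval y (hInt n k) :=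
  (norm_nonneg _).trans (norm_aeval_hInt_le (fun i => (Real.norm_of_nonneg (hy i)).le) k)

lemma summable_aeval_hInt_const (n : ℕ) (hr0 : 0 ≤ r) (hr1 : r < 1) :
    Summable fun k : ℤ => aeval (fun _ => r) (hInt n k) := by
  rw [← Function.Injective.summable_iff Nat.cast_injective (f := fun k : ℤ => _) fun k hk => by
    rw [hInt, if_neg fun hk0 => hk ⟨k.toNat, Int.toNat_of_nonneg hk0⟩, map_zero]]
  exact (summable_choose_mul_geometric_of_norm_lt_one n
    (by rwa [Real.norm_of_nonneg hr0])).of_nonneg_of_le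
    (fun k => aeval_hInt_nonneg (fun _ => hr0) _) (aeval_hInt_const_le n hr0)

lemma summable_permanent_aeval_hInt (n N : ℕ) (hr0 : 0 ≤ r) (hr1 : r < 1) :
    Summable fun lam : Fin N → ℕ => (Matrix.of fun i j : Fin N =>
      aeval (fun _ : Fin n => r) (hInt n ((lam i : ℤ) + (j : ℤ) - (i : ℤ)))).permanent := by
  simp_rw [← Matrix.permanent_transpose (Matrix.of _)]
  refine summable_sum fun σ _ => ?_
  refine summable_prod_apply (f := fun i (m : ℕ) =>
    aeval (fun _ : Fin n => r) (hInt n ((m : ℤ) + (σ i : ℕ) - (i : ℕ))))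
    (fun i m => aeval_hInt_nonneg (fun _ => hr0) _) fun i => ?_
  exact (summable_aeval_hInt_const n hr0 hr1).comp_injective fun a b hab => by simpa using hab

lemma summable_norm_aeval_schur {N : ℕ} (hx : ∀ i, ‖x i‖ < 1) :
    Summable fun lam : Fin N → ℕ => ‖aeval x (schur n N lam)‖ := by
  obtain ⟨r, hr0, hr1, hxr⟩ := exists_lt_one_forall_norm_lt hx
  exact (summable_permanent_aeval_hInt n N hr0.le hr1).of_nonneg_of_le (fun _ => norm_nonneg _)
    (norm_aeval_schur_le fun i => (hxr i).le)

end Bounds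

/-- The partitions with at most `n + 1` parts correspond to pairs of the last part `m` and a
partition with at most `n` parts, to all of whose parts, padded with `0`, one adds `m`. -/
def antitoneSnocEquiv (n : ℕ) :
    ℕ × {lam : Fin n → ℕ // Antitone lam} ≃ {lam : Fin (n + 1) → ℕ // Antitone lam} where
  toFun p := ⟨fun i => Fin.snoc (α := fun _ => ℕ) p.2.1 0 i + p.1, fun i j hij => by
    cases j using Fin.lastCases with
    | last => simp
    | cast j =>
      cases i using Fin.lastCases with
      | last => exact absurd hij j.castSucc_lt_last.not_ge
      | cast i => simpa using p.2.2 (by simpa using hij)⟩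
  invFun lam := (lam.1 (Fin.last n), ⟨fun i => lam.1 i.castSucc - lam.1 (Fin.last n),
    fun _ _ hij => Nat.sub_le_sub_right (lam.2 (by simpa using hij)) _⟩)
  left_inv p := by ext <;> simp
  right_inv lam := by
    ext i
    cases i using Fin.lastCases with
    | last => simp
    | cast i => simpa using Nat.sub_add_cancel (lam.2 i.castSucc.le_last)

/-- The right-hand side `∏_i 1/(1 - x_i) · ∏_{i<j} 1/(1 - x_i x_j)` of Littlewood's identity. -/
def littlewoodProd {F : Type*} [Field F] {n : ℕ} (x : Fin n → F) : F :=
  (∏ i, (1 - x i)⁻¹) * ∏ i, ∏ j ∈ Finset.Ioi i, (1 - x i * x j)⁻¹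

lemma littlewoodProd_succAbove {F : Type*} [Field F] {n : ℕ} (x : Fin (n + 1) → F)
    (k : Fin (n + 1)) :
    littlewoodProd x = (1 - x k)⁻¹ * (∏ l, (1 - x k * x (k.succAbove l))⁻¹) *
      littlewoodProd (x ∘ k.succAbove) := by
  rw [littlewoodProd, Fin.prod_univ_succAbove _ k,
    prod_Ioi_succAbove_of_symm (fun i j => by rw [mul_comm (x i)]) k, littlewoodProd]
  simp only [Function.comp_apply]
  ring

lemma sum_alternant_zero_mul_littlewoodProd {F : Type*} [Field F] {n : ℕ} {x : Fin (n + 1) → F}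
    (hinj : Function.Injective x) (h0 : ∀ i, x i ≠ 0) (hp : ∀ i j, x i * x j ≠ 1) :
    ∑ k : Fin (n + 1), (-1) ^ (n + (k : ℕ)) * (∏ l, x (k.succAbove l)) *
        (alternant (x ∘ k.succAbove) 0 * littlewoodProd (x ∘ k.succAbove)) =
      (1 - ∏ k, x k) * (alternant x 0 * littlewoodProd x) := by
  rw [← sum_one_sub_mul_prod_succAbove_div_sub hinj h0 fun i hi => hp i i (by simp [hi]),
    Finset.sum_mul]
  refine Finset.sum_congr rfl fun k _ => ?_
  have hdiff : ∏ l, (x (k.succAbove l) - x k) ≠ 0 := Finset.prod_ne_zero_iff.2 fun l _ =>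
    sub_ne_zero.2 (hinj.ne (k.succAbove_ne l))
  have hprod : ∏ l, (1 - x k * x (k.succAbove l)) ≠ 0 := Finset.prod_ne_zero_iff.2 fun l _ =>
    sub_ne_zero.2 (hp _ _).symm
  have hk : 1 - x k ≠ 0 := sub_ne_zero.2 fun hk => hp k k (by simp [← hk])
  have halt : (-1) ^ (n + (k : ℕ)) * alternant x 0 =
      (∏ l, (x (k.succAbove l) - x k)) * alternant (x ∘ k.succAbove) 0 := by
    rw [pow_add, mul_assoc, alternant_zero_succAbove, ← mul_assoc]
    congr 1
    simp_rw [← neg_sub (x k), Finset.prod_neg, Finset.card_univ, Fintype.card_fin]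
  have hsq : ((-1 : F) ^ (n + (k : ℕ))) * (-1) ^ (n + (k : ℕ)) = 1 := by
    rw [← mul_pow, neg_one_mul, neg_neg, one_pow]
  rw [littlewoodProd_succAbove x k, Finset.prod_div_distrib, Finset.prod_mul_distrib,
    Finset.prod_inv_distrib]
  field_simp
  generalize (-1 : F) ^ (n + (k : ℕ)) = ε at halt hsq ⊢
  linear_combination (-ε * (∏ l, x (k.succAbove l)) * littlewoodProd (x ∘ k.succAbove)) * halt +
    (∏ l, x (k.succAbove l)) * littlewoodProd (x ∘ k.succAbove) * alternant x 0 * hsq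

section Distinct

variable {𝕜 : Type*} [NormedField 𝕜]

lemma one_sub_ne_zero_of_norm_lt_one {a : 𝕜} (ha : ‖a‖ < 1) : 1 - a ≠ 0 :=
  sub_ne_zero.2 fun h => by simp [← h] at ha

lemma norm_mul_lt_one {a b : 𝕜} (ha : ‖a‖ < 1) (hb : ‖b‖ < 1) : ‖a * b‖ < 1 :=
  (norm_mul a b).trans_lt (mul_lt_one_of_nonneg_of_lt_one_left (norm_nonneg a) ha hb.le)

lemma norm_prod_lt_one {ι : Type*} [Fintype ι] [Nonempty ι] {x : ι → 𝕜} (hx : ∀ i, ‖x i‖ < 1) :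
    ‖∏ i, x i‖ < 1 := by
  classical
  inhabit ι
  rw [norm_prod, ← Finset.mul_prod_erase _ _ (Finset.mem_univ default)]
  exact mul_lt_one_of_nonneg_of_lt_one_left (norm_nonneg _) (hx default)
    (Finset.prod_le_one (fun i _ => norm_nonneg _) fun i _ => (hx i).le)

variable [CompleteSpace 𝕜] [Algebra ℚ 𝕜] {n : ℕ}

lemma summable_alternant {x : Fin n → 𝕜} (hx : ∀ i, ‖x i‖ < 1) :
    Summable fun lam : {lam : Fin n → ℕ // Antitone lam} => alternant x lam.1 := by
  have hsum := ((summable_norm_aeval_schur (N := n) hx).of_norm.comp_injective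
    (Subtype.val_injective (p := Antitone))).mul_right (alternant x 0)
  simpa only [Function.comp_apply, schur_mul_alternant_zero] using hsum

theorem hasSum_alternant {x : Fin n → 𝕜} (hx : ∀ i, ‖x i‖ < 1)
    (hinj : Function.Injective x) (h0 : ∀ i, x i ≠ 0) :
    HasSum (fun lam : {lam : Fin n → ℕ // Antitone lam} => alternant x lam.1)
      (alternant x 0 * littlewoodProd x) := by
  induction n with
  | zero =>
    have : Unique {lam : Fin 0 → ℕ // Antitone lam} :=
      ⟨⟨0, antitone_const⟩, fun lam => Subtype.ext (Subsingleton.elim _ _)⟩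
    convert! hasSum_unique (fun lam : {lam : Fin 0 → ℕ // Antitone lam} => alternant x lam.1)
    simp [alternant, littlewoodProd]
  | succ n ih =>
    have hface (k : Fin (n + 1)) : HasSum
        (fun mu : {lam : Fin n → ℕ // Antitone lam} => alternant (x ∘ k.succAbove) mu.1)
        (alternant (x ∘ k.succAbove) 0 * littlewoodProd (x ∘ k.succAbove)) :=
      ih (fun i => hx _) (hinj.comp k.succAbove_right_injective) fun i => h0 _
    have hsnoc : HasSum (fun mu : {lam : Fin n → ℕ // Antitone lam} =>
        alternant x (Fin.snoc (α := fun _ => ℕ) mu.1 0))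
        ((1 - ∏ k, x k) * (alternant x 0 * littlewoodProd x)) := by
      simp_rw [alternant_snoc_zero]
      rw [← sum_alternant_zero_mul_littlewoodProd hinj h0 fun i j hij => by
        simpa [hij] using norm_mul_lt_one (hx i) (hx j)]
      exact hasSum_sum fun k _ => (hface k).mul_left _
    have hsplit (p : ℕ × {lam : Fin n → ℕ // Antitone lam}) :
        alternant x (antitoneSnocEquiv n p).1 =
          (∏ k, x k) ^ p.1 * alternant x (Fin.snoc (α := fun _ => ℕ) p.2.1 0) :=
      alternant_add_const x _ _
    have hmul := (hasSum_geometric_of_norm_lt_one (norm_prod_lt_one hx)).mul hsnoc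
      (((antitoneSnocEquiv n).summable_iff.2 (summable_alternant hx)).congr hsplit)
    rw [inv_mul_cancel_left₀ (one_sub_ne_zero_of_norm_lt_one (norm_prod_lt_one hx))] at hmul
    rw [← (antitoneSnocEquiv n).hasSum_iff]
    exact hmul.congr_fun hsplit

theorem hasSum_aeval_schur_of_injective {x : Fin n → 𝕜} (hx : ∀ i, ‖x i‖ < 1)
    (hinj : Function.Injective x) (h0 : ∀ i, x i ≠ 0) :
    HasSum (fun lam : {lam : Fin n → ℕ // Antitone lam} => aeval x (schur n n lam.1))
      (littlewoodProd x) := by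
  rw [← hasSum_mul_right_iff (alternant_zero_ne_zero hinj), mul_comm]
  simpa only [schur_mul_alternant_zero] using hasSum_alternant hx hinj h0

end Distinct

section Density

variable {𝕜 : Type*} [NontriviallyNormedField 𝕜]

lemma dense_setOf_ne_zero {E : Type*} [AddCommGroup E] [TopologicalSpace E] [ContinuousAdd E]
    [Module 𝕜 E] [ContinuousSMul 𝕜 E] {φ : E →L[𝕜] 𝕜} (hφ : φ ≠ 0) : Dense {v | φ v ≠ 0} := by
  refine interior_eq_empty_iff_dense_compl.1 (Set.not_nonempty_iff_eq_empty.1 fun hne => hφ ?_)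
  have htop := Submodule.eq_top_of_nonempty_interior' φ.ker hne
  ext v
  exact htop.ge (Submodule.mem_top (x := v))

lemma dense_setOf_injective_and_ne_zero [CompleteSpace 𝕜] {ι : Type*} [Finite ι] :
    Dense {x : ι → 𝕜 | Function.Injective x ∧ ∀ i, x i ≠ 0} := by
  classical
  cases nonempty_fintype ι
  let φ : {p : ι × ι // p.1 ≠ p.2} ⊕ ι → (ι → 𝕜) →L[𝕜] 𝕜 :=
    Sum.elim (fun p => .proj (φ := fun _ => 𝕜) p.1.1 - .proj p.1.2) .proj
  have hφ (k) : φ k ≠ 0 := by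
    rcases k with p | i
    · intro h
      simpa [φ, p.2] using DFunLike.congr_fun h (Pi.single p.1.1 1)
    · intro h
      simpa [φ] using DFunLike.congr_fun h (Pi.single i 1)
  refine (dense_iInter_of_isOpen (fun k => isOpen_ne_fun (φ k).continuous continuous_const)
    fun k => dense_setOf_ne_zero (hφ k)).mono fun x hx => ?_
  rw [Set.mem_iInter] at hx
  refine ⟨fun i j hij => of_not_not fun hne => hx (.inl ⟨(i, j), hne⟩) ?_, fun i => hx (.inr i)⟩
  simpa [φ, sub_eq_zero] using hij

end Density

section Continuity

variable {n : ℕ}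

lemma continuousOn_littlewoodProd {𝕜 : Type*} [NormedField 𝕜] :
    ContinuousOn (littlewoodProd : (Fin n → 𝕜) → 𝕜) {x | ∀ i, ‖x i‖ < 1} := by
  unfold littlewoodProd
  exact .mul
    (continuousOn_finsetProd _ fun i _ => .inv₀ (by fun_prop) fun x hx =>
      one_sub_ne_zero_of_norm_lt_one (hx i))
    (continuousOn_finsetProd _ fun i _ => continuousOn_finsetProd _ fun j _ =>
      .inv₀ (by fun_prop) fun x hx =>
        one_sub_ne_zero_of_norm_lt_one (norm_mul_lt_one (hx i) (hx j)))

lemma continuousOn_tsum_aeval_schur {𝕜 : Type*} [NormedField 𝕜] [CompleteSpace 𝕜] [Algebra ℚ 𝕜]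
    {r : ℝ} (hr0 : 0 ≤ r) (hr1 : r < 1) :
    ContinuousOn (fun x : Fin n → 𝕜 =>
      ∑' lam : {lam : Fin n → ℕ // Antitone lam}, aeval x (schur n n lam.1))
      {x | ∀ i, ‖x i‖ < r} := by
  refine continuousOn_tsum (fun lam => Continuous.continuousOn ?_)
    ((summable_permanent_aeval_hInt n n hr0 hr1).comp_injective Subtype.val_injective)
    fun lam x hx => norm_aeval_schur_le (fun i => (hx i).le) _
  simp only [aeval_def, MvPolynomial.eval₂_eq_eval_map]
  exact MvPolynomial.continuous_eval _

end Continuity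

theorem littlewood_identity_general {𝕜 : Type*} [NontriviallyNormedField 𝕜] [CompleteSpace 𝕜]
    [Algebra ℚ 𝕜] {n : ℕ} {x : Fin n → 𝕜} (hx : ∀ i, ‖x i‖ < 1) :
    HasSum (fun lam : {lam : Fin n → ℕ // Antitone lam} => aeval x (schur n n lam.1))
      ((∏ i, (1 - x i)⁻¹) * ∏ i, ∏ j ∈ Finset.Ioi i, (1 - x i * x j)⁻¹) := by
  obtain ⟨r, hr0, hr1, hxr⟩ := exists_lt_one_forall_norm_lt hx
  let U : Set (Fin n → 𝕜) := {y | ∀ i, ‖y i‖ < r}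
  let G : Set (Fin n → 𝕜) := {y | Function.Injective y ∧ ∀ i, y i ≠ 0}
  let S (y : Fin n → 𝕜) : 𝕜 :=
    ∑' lam : {lam : Fin n → ℕ // Antitone lam}, aeval y (schur n n lam.1)
  have hU : IsOpen U := by
    simp only [U, Set.ofPred_forall]
    exact isOpen_iInter_of_finite fun i => isOpen_lt (by fun_prop) continuous_const
  have hUG : Set.EqOn S littlewoodProd (U ∩ G) := fun y hy =>
    (hasSum_aeval_schur_of_injective (fun i => (hy.1 i).trans hr1) hy.2.1 hy.2.2).tsum_eq
  have heq : Set.EqOn S littlewoodProd U :=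
    hUG.of_subset_closure (continuousOn_tsum_aeval_schur hr0.le hr1)
      (continuousOn_littlewoodProd.mono fun y hy i => (hy i).trans hr1) Set.inter_subset_left
      (dense_setOf_injective_and_ne_zero.open_subset_closure_inter hU)
  have hsum : Summable fun lam : {lam : Fin n → ℕ // Antitone lam} => aeval x (schur n n lam.1) :=
    (summable_norm_aeval_schur hx).of_norm.comp_injective Subtype.val_injective
  exact hsum.hasSum_iff.2 (heq hxr)

/-- Littlewood's identity: the generating function for all Schur polynomials in `n`
variables is `∑_λ s_λ(x_1, …, x_n) = ∏_i 1/(1-x_i) · ∏_{i<j} 1/(1-x_i x_j)`, the sum over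
all partitions `λ` with at most `n` parts (here for real `x_i` with `|x_i| < 1`). -/
theorem littlewood_identity (n : ℕ) (x : Fin n → ℝ) (hx : ∀ i, |x i| < 1) :
    ∑' lam : {f : Fin n → ℕ // ∀ i j : Fin n, i ≤ j → f j ≤ f i},
        aeval x (schur n n lam.val) =
      (∏ i, (1 - x i)⁻¹) *
        ∏ i, ∏ j ∈ Finset.univ.filter (fun j => i < j), (1 - x i * x j)⁻¹ := by
  simp only [Finset.filter_lt_eq_Ioi]
  exact (littlewood_identity_general hx).tsum_eq
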